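/- arXiv:1707.06520 — 5 statements merged into one kernel-verified Lean document; each statement's English description precedes it below -/
import Mathlib

section
/- Let n ≥ 2 be a natural number and let G be the (n−1)×(n−1) matrix over K whose diagonal entries are all equal to q + q^{−1}, whose entries immediately above and immediately below the diagonal are all equal to 1, and whose remaining entries are 0 (the Gram matrix of the Temperley–Lieb cell module of b_n with n−2 propagating lines, in the half-diagram basis, with parameter δ = [2]). Then det G = [n]. -/
/-- The quantum integer `[m] = (q^m - q^{-m})/(q - q⁻¹)`. -/
noncomputable def qint {K : Type*} [Field K] (q : K) (m : ℤ) : K :=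
  (q ^ m - q ^ (-m)) / (q - q⁻¹)

/-!
Expanding the determinant of a tridiagonal Toeplitz matrix twice, along the first row and then the
first column, gives a two-term recurrence in the size of the matrix. It is the recurrence defining
the Dickson polynomials of the second kind, evaluated at the diagonal entry `d`, with parameter the
product `l * u` of the off-diagonal entries. Writing `d = x + y` and `l * u = x * y`, its solution
is `(x ^ (n + 1) - y ^ (n + 1)) / (x - y)`, which for `x = q` and `y = q⁻¹` is `[n + 1]`.
-/

open Polynomial

section CommRing

variable {R : Type*} [CommRing R]

theorem det_eq_mul_det_submatrix_succ_of_column_zero {n : ℕ}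
    (A : Matrix (Fin (n + 1)) (Fin (n + 1)) R) (hA : ∀ i : Fin n, A i.succ 0 = 0) :
    A.det = A 0 0 * (A.submatrix Fin.succ Fin.succ).det := by
  rw [Matrix.det_succ_column_zero, Fin.sum_univ_succ]
  simp [hA]

theorem det_eq_sub_of_row_zero_of_column_zero {n : ℕ}
    (A : Matrix (Fin (n + 2)) (Fin (n + 2)) R)
    (hrow : ∀ j : Fin n, A 0 j.succ.succ = 0) (hcol : ∀ i : Fin n, A i.succ.succ 0 = 0) :
    A.det = A 0 0 * (A.submatrix Fin.succ Fin.succ).det -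
      A 0 1 * A 1 0 * (A.submatrix (Fin.succ ∘ Fin.succ) (Fin.succ ∘ Fin.succ)).det := by
  have minor : (A.submatrix Fin.succ (Fin.succAbove 1)).det =
      A 1 0 * (A.submatrix (Fin.succ ∘ Fin.succ) (Fin.succ ∘ Fin.succ)).det := by
    have deleted_column : (Fin.succAbove 1 : Fin (n + 1) → Fin (n + 2)) ∘ Fin.succ =
        Fin.succ ∘ Fin.succ :=
      funext Fin.one_succAbove_succ
    rw [det_eq_mul_det_submatrix_succ_of_column_zero _ fun i => by simpa using hcol i,
      Matrix.submatrix_submatrix, deleted_column]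
    simp
  rw [Matrix.det_succ_row_zero, Fin.sum_univ_succ, Fin.sum_univ_succ]
  simp [hrow, minor, sub_eq_add_neg, mul_assoc]

/-- The `n × n` tridiagonal Toeplitz matrix with `d` on the diagonal, `l` immediately below it and
`u` immediately above it. The Gram matrix of the theorem is the case `l = u = 1`. -/
def tridiagonalToeplitz (l d u : R) (n : ℕ) : Matrix (Fin n) (Fin n) R :=
  Matrix.of fun i j =>
    if (i : ℕ) = j then d else if (i : ℕ) + 1 = j then u else if (j : ℕ) + 1 = i then l else 0

theorem tridiagonalToeplitz_submatrix_succ (l d u : R) (n : ℕ) :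
    (tridiagonalToeplitz l d u (n + 1)).submatrix Fin.succ Fin.succ =
      tridiagonalToeplitz l d u n := by
  ext i j
  simp [tridiagonalToeplitz]

theorem det_tridiagonalToeplitz_add_two (l d u : R) (n : ℕ) :
    (tridiagonalToeplitz l d u (n + 2)).det =
      d * (tridiagonalToeplitz l d u (n + 1)).det - l * u * (tridiagonalToeplitz l d u n).det := by
  rw [det_eq_sub_of_row_zero_of_column_zero _ (by simp [tridiagonalToeplitz])
      (by simp [tridiagonalToeplitz]), ← Matrix.submatrix_submatrix,
    tridiagonalToeplitz_submatrix_succ, tridiagonalToeplitz_submatrix_succ]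
  simp [tridiagonalToeplitz, mul_comm u l]

theorem det_tridiagonalToeplitz (l d u : R) (n : ℕ) :
    (tridiagonalToeplitz l d u n).det = (dickson 2 (l * u) n).eval d := by
  induction n using Nat.twoStepInduction with
  | zero => norm_num
  | one => simp [tridiagonalToeplitz]
  | more n ih ih_succ => simp [det_tridiagonalToeplitz_add_two, ih, ih_succ]

theorem dickson_two_eval_add_mul_sub (x y : R) (n : ℕ) :
    (dickson 2 (x * y) n).eval (x + y) * (x - y) = x ^ (n + 1) - y ^ (n + 1) := by
  induction n using Nat.twoStepInduction with
  | zero => norm_num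
  | one => simp only [dickson_one, eval_X]; ring
  | more n ih ih_succ =>
    simp only [dickson_add_two, eval_sub, eval_mul, eval_X, eval_C]
    linear_combination (x + y) * ih_succ - x * y * ih

end CommRing

theorem dickson_two_one_eval_add_inv {K : Type*} [Field K] {q : K} (hq : q ≠ 0) (hq2 : q ^ 2 ≠ 1)
    (n : ℕ) : (dickson 2 1 n).eval (q + q⁻¹) = qint q (n + 1 : ℕ) := by
  have sub_inv_ne_zero : q - q⁻¹ ≠ 0 := by
    rwa [sub_ne_zero, Ne, ← mul_eq_one_iff_eq_inv₀ hq, ← sq]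
  rw [qint, eq_div_iff sub_inv_ne_zero, zpow_neg, zpow_natCast, ← inv_pow,
    ← dickson_two_eval_add_mul_sub, mul_inv_cancel₀ hq]

/-- Let `n ≥ 2` and let `G` be the `(n-1)×(n-1)` tridiagonal matrix with diagonal entries
`q + q⁻¹`, sub/super-diagonal entries `1` and remaining entries `0` (the Gram matrix of the
Temperley–Lieb cell module of `b_n` with `n-2` propagating lines, with `δ = [2]`).
Then `det G = [n]`. -/
theorem tl_gram_det {K : Type*} [Field K] (q : K) (hq : q ≠ 0) (hq2 : q ^ 2 ≠ 1)
    (n : ℕ) (hn : 2 ≤ n)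
    (G : Matrix (Fin (n - 1)) (Fin (n - 1)) K)
    (hG : ∀ i j : Fin (n - 1), G i j =
      if (i : ℕ) = (j : ℕ) then q + q⁻¹
      else if (i : ℕ) + 1 = (j : ℕ) ∨ (j : ℕ) + 1 = (i : ℕ) then 1
      else 0) :
    G.det = qint q n := by
  have toeplitz : G = tridiagonalToeplitz 1 (q + q⁻¹) 1 (n - 1) := by
    ext i j
    rw [hG]
    simp only [tridiagonalToeplitz, Matrix.of_apply, ite_or]
  rw [toeplitz, det_tridiagonalToeplitz, one_mul, dickson_two_one_eval_add_inv hq hq2,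
    Nat.sub_add_cancel (by lia)]
end

section
/- Let Q be a nonzero element of K with [w+1] ≠ 0, and set κ = [w]/[w+1] and δ = q + q^{−1}. For n ≥ 2 let M be the n×n matrix over K, with rows and columns indexed by 0,…,n−1, defined by: M₀₀ = M₀₁ = M₁₀ = κ; M_{ii} = δ for 1 ≤ i ≤ n−1; M_{i,i+1} = M_{i+1,i} = 1 for 1 ≤ i ≤ n−2; and all other entries 0 (the Gram matrix M^b_n(n−2) of the blob algebra cell module W_{n−2}(n) with the blob generator normalised to be idempotent). Then det M = [w]·[w+n]/[w+1]². -/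
/-- The shifted quantum bracket `[w+m] = (Q·q^m - Q⁻¹·q^{-m})/(q - q⁻¹)`,
where `Q` is thought of as `q^w` for a formal exponent `w`. -/
noncomputable def qbr {K : Type*} [Field K] (q Q : K) (m : ℤ) : K :=
  (Q * q ^ m - Q⁻¹ * q ^ (-m)) / (q - q⁻¹)

/-!
Expanding along the first row and column, the blob Gram determinant is
`κ * det T (n - 1) - κ ^ 2 * det T (n - 2)`, where `T k` is the `k × k` tridiagonal Toeplitz matrix
with diagonal `δ` and off-diagonal entries `1`. The same expansion shows that `det T k` is the
rescaled Chebyshev polynomial `S k` at `δ`. On the other hand `m ↦ [w+m]` solves the Chebyshev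
recurrence with parameter `δ = q + q⁻¹`, so `[w+n] = [w+1] S (n - 1) - [w] S (n - 2)`, and the
determinant is `κ / [w+1]` times this.
-/

open Polynomial.Chebyshev (S S_eq)

section CommRing

variable {R : Type*} [CommRing R]

theorem det_eq_sub_of_border_succ_succ_eq_zero {n : ℕ} (M : Matrix (Fin (n + 2)) (Fin (n + 2)) R)
    (hrow : ∀ j : Fin n, M 0 j.succ.succ = 0) (hcol : ∀ i : Fin n, M i.succ.succ 0 = 0) :
    M.det = M 0 0 * (M.submatrix Fin.succ Fin.succ).det -
      M 0 1 * M 1 0 * ((M.submatrix Fin.succ Fin.succ).submatrix Fin.succ Fin.succ).det := by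
  have skip : Fin.succAbove (1 : Fin (n + 2)) ∘ Fin.succ = Fin.succ ∘ Fin.succ :=
    funext Fin.one_succAbove_succ
  have minor : (M.submatrix Fin.succ (Fin.succAbove 1)).det =
      M 1 0 * ((M.submatrix Fin.succ Fin.succ).submatrix Fin.succ Fin.succ).det := by
    simp [Matrix.det_succ_column_zero, Fin.sum_univ_succ, hcol, skip]
  rw [Matrix.det_succ_row_zero, Fin.sum_univ_succ, Fin.sum_univ_succ, Fin.succ_zero_eq_one, minor]
  simp only [hrow, Fin.val_zero, Fin.val_one, Fin.succAbove_zero, pow_zero, pow_one, mul_zero,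
    zero_mul, Finset.sum_const_zero, add_zero, one_mul]
  ring

/-- The Gram matrix of the cell module of the Temperley–Lieb algebra on `n + 1` strands spanned by
the half-diagrams with exactly one cup. The loop parameter is `δ`, and the index `i` stands for the
cup joining the strands `i` and `i + 1`, counted from `0`. -/
def temperleyLiebGram (δ : R) (n : ℕ) : Matrix (Fin n) (Fin n) R :=
  .of fun i j =>
    if (i : ℕ) = j then δ else if (i : ℕ) + 1 = j ∨ (j : ℕ) + 1 = i then 1 else 0

theorem temperleyLiebGram_apply (δ : R) (n : ℕ) (i j : Fin n) :
    temperleyLiebGram δ n i j =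
      if (i : ℕ) = j then δ else if (i : ℕ) + 1 = j ∨ (j : ℕ) + 1 = i then 1 else 0 :=
  rfl

theorem temperleyLiebGram_submatrix_succ (δ : R) (n : ℕ) :
    (temperleyLiebGram δ (n + 1)).submatrix Fin.succ Fin.succ = temperleyLiebGram δ n := by
  ext i j
  simp [temperleyLiebGram_apply]

theorem det_temperleyLiebGram_add_two (δ : R) (n : ℕ) :
    (temperleyLiebGram δ (n + 2)).det =
      δ * (temperleyLiebGram δ (n + 1)).det - (temperleyLiebGram δ n).det := by
  have hrow (j : Fin n) : temperleyLiebGram δ (n + 2) 0 j.succ.succ = 0 := by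
    simp [temperleyLiebGram_apply]
  have hcol (i : Fin n) : temperleyLiebGram δ (n + 2) i.succ.succ 0 = 0 := by
    simp [temperleyLiebGram_apply]
  rw [det_eq_sub_of_border_succ_succ_eq_zero _ hrow hcol, temperleyLiebGram_submatrix_succ,
    temperleyLiebGram_submatrix_succ]
  simp [temperleyLiebGram_apply]

theorem det_temperleyLiebGram (δ : R) (n : ℕ) :
    (temperleyLiebGram δ n).det = (S R n).eval δ := by
  induction n using Nat.twoStepInduction with
  | zero => simp
  | one => simp [temperleyLiebGram_apply]
  | more n ih₀ ih₁ => simp [det_temperleyLiebGram_add_two, ih₀, ih₁]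

/-- The Gram matrix of the cell module `W_{n-2}(n)` of the blob algebra, for `2 ≤ n`. The index `0`
stands for the blobbed cup on the first two strands, and `i ≥ 1` for the undecorated cup joining the
`i`-th strand to the next, counted from `1`; `κ` and `δ` are the weights of a blobbed and of an
undecorated loop. -/
def blobGram (κ δ : R) (n : ℕ) : Matrix (Fin n) (Fin n) R :=
  .of fun i j =>
    if ((i : ℕ) = 0 ∧ (j : ℕ) = 0) ∨ ((i : ℕ) = 0 ∧ (j : ℕ) = 1) ∨
        ((i : ℕ) = 1 ∧ (j : ℕ) = 0) then κ
    else temperleyLiebGram δ n i j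

theorem blobGram_submatrix_succ (κ δ : R) (n : ℕ) :
    (blobGram κ δ (n + 1)).submatrix Fin.succ Fin.succ = temperleyLiebGram δ n := by
  ext i j
  simp [blobGram, temperleyLiebGram_apply]

theorem det_blobGram_add_two (κ δ : R) (n : ℕ) :
    (blobGram κ δ (n + 2)).det = κ * (S R (n + 1)).eval δ - κ ^ 2 * (S R n).eval δ := by
  have hrow (j : Fin n) : blobGram κ δ (n + 2) 0 j.succ.succ = 0 := by
    simp [blobGram, temperleyLiebGram_apply]
  have hcol (i : Fin n) : blobGram κ δ (n + 2) i.succ.succ 0 = 0 := by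
    simp [blobGram, temperleyLiebGram_apply]
  rw [det_eq_sub_of_border_succ_succ_eq_zero _ hrow hcol, blobGram_submatrix_succ,
    temperleyLiebGram_submatrix_succ, det_temperleyLiebGram, det_temperleyLiebGram]
  simp [blobGram, sq]

theorem eq_of_chebyshev_recurrence {δ : R} {f g : ℤ → R}
    (hf : ∀ m, f (m + 2) = δ * f (m + 1) - f m) (hg : ∀ m, g (m + 2) = δ * g (m + 1) - g m)
    (h₀ : f 0 = g 0) (h₁ : f 1 = g 1) : f = g := by
  ext m
  induction m using Polynomial.Chebyshev.induct with
  | zero => exact h₀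
  | one => exact h₁
  | add_two n ih₁ ih₀ => rw [hf, hg, ih₁, ih₀]
  | neg_add_one n ih₀ ih₁ =>
    linear_combination (norm := ring_nf) hf (-n - 1) - hg (-n - 1) + δ * ih₀ - ih₁

theorem eval_chebyshevS_eq (δ : R) (m : ℤ) :
    (S R m).eval δ = δ * (S R (m - 1)).eval δ - (S R (m - 2)).eval δ := by
  simp [S_eq R m]

theorem eq_eval_chebyshevS_of_recurrence {δ : R} {f : ℤ → R}
    (hf : ∀ m, f (m + 2) = δ * f (m + 1) - f m) (m : ℤ) :
    f m = f 1 * (S R (m - 1)).eval δ - f 0 * (S R (m - 2)).eval δ := by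
  refine congrFun (g := fun m => f 1 * (S R (m - 1)).eval δ - f 0 * (S R (m - 2)).eval δ)
    (eq_of_chebyshev_recurrence hf (fun m => ?_) ?_ ?_) m
  · rw [eval_chebyshevS_eq δ (m + 2 - 1), eval_chebyshevS_eq δ (m + 2 - 2)]
    ring_nf
  · simp
  · simp

end CommRing

theorem qbr_add_two {K : Type*} [Field K] {q : K} (hq : q ≠ 0) (Q : K) (m : ℤ) :
    qbr q Q (m + 2) = (q + q⁻¹) * qbr q Q (m + 1) - qbr q Q m := by
  simp only [qbr, neg_add, zpow_add₀ hq, zpow_neg, zpow_one, zpow_two]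
  field_simp
  ring

/-- Let `κ = [w]/[w+1]`, `δ = q + q⁻¹`, and for `n ≥ 2` let `M` be the `n×n` matrix with
`M₀₀ = M₀₁ = M₁₀ = κ`, diagonal entries `δ` for `1 ≤ i ≤ n-1`, entries `1` at `(i,i+1)` and
`(i+1,i)` for `1 ≤ i ≤ n-2`, and `0` elsewhere (the Gram matrix `M^b_n(n-2)` of the blob
algebra cell module `W_{n-2}(n)`). Then `det M = [w]·[w+n]/[w+1]²`. -/
theorem blob_gram_det_plus {K : Type*} [Field K] (q : K) (hq : q ≠ 0) (hq2 : q ^ 2 ≠ 1)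
    (Q : K) (hQ : Q ≠ 0) (hw1 : qbr q Q 1 ≠ 0)
    (κ δ : K) (hκ : κ = qbr q Q 0 / qbr q Q 1) (hδ : δ = q + q⁻¹)
    (n : ℕ) (hn : 2 ≤ n)
    (M : Matrix (Fin n) (Fin n) K)
    (hM : ∀ i j : Fin n, M i j =
      if ((i : ℕ) = 0 ∧ (j : ℕ) = 0) ∨ ((i : ℕ) = 0 ∧ (j : ℕ) = 1) ∨
          ((i : ℕ) = 1 ∧ (j : ℕ) = 0) then κ
      else if (i : ℕ) = (j : ℕ) then δ
      else if (i : ℕ) + 1 = (j : ℕ) ∨ (j : ℕ) + 1 = (i : ℕ) then 1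
      else 0) :
    M.det = qbr q Q 0 * qbr q Q n / (qbr q Q 1) ^ 2 := by
  obtain ⟨k, rfl⟩ := Nat.exists_eq_add_of_le' hn
  have hqbr : qbr q Q (k + 2 : ℕ) =
      qbr q Q 1 * (S K (k + 1)).eval δ - qbr q Q 0 * (S K k).eval δ := by
    simpa [add_sub_assoc] using eq_eval_chebyshevS_of_recurrence (hδ ▸ qbr_add_two hq Q) (k + 2)
  have hdet : M = blobGram κ δ (k + 2) := Matrix.ext hM
  rw [hdet, det_blobGram_add_two, hqbr, hκ]
  field_simp
end

section
/- Let Q₁, Q₂ be nonzero elements of K with [w₁+1] ≠ 0 and [w₂+1] ≠ 0, and set κ_L = [w₁]/[w₁+1], κ_R = [w₂]/[w₂+1] and δ = q + q^{−1}. For n ≥ 3 let M′ be the (n+1)×(n+1) matrix over K, with rows and columns indexed by 0,…,n, defined by: M′₀₀ = M′₀₁ = M′₁₀ = κ_L; M′₀₂ = M′₂₀ = 1; M′_{ii} = δ for 1 ≤ i ≤ n−1; M′_{i,i+1} = M′_{i+1,i} = 1 for 1 ≤ i ≤ n−2; M′_{n−1,n} = M′_{n,n−1} = M′_{nn} = κ_R;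 and all other entries 0 (the Gram matrix of the symplectic blob cell module with n−2 undecorated propagating lines, with both blob generators normalised to be idempotent). Then det M′ = [w₂]·[w₁+2]·[w₁−w₂−n+2] / ([w₁+1]²·[w₂+1]²). -/
/-!
The Gram matrix is tridiagonal except for the entries `M'₀₂ = M'₂₀ = 1`. Its rows `0` and `1` agree
outside column `1`, so subtracting one from the other splits off the factor
`δ - κ_L = [w₁+2]/[w₁+1]` and leaves the genuinely tridiagonal minor that omits the index `1`.
The leading minors of that matrix satisfy the recurrence `D_{m+2} = δ D_{m+1} - D_m`, which is the
recurrence of the quantum brackets, so that `D_m = [w₁+1-m]/[w₁+1]`. The last step of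
the three-term recurrence involves `κ_R` and is evaluated by the product formula
`[u+m][v+l+1] - [u+m+1][v+l] = [u-v+m-l]`.
-/

/-- The `n × n` tridiagonal matrix with diagonal `a`, superdiagonal `b` and subdiagonal `c`. The
sequences do not depend on `n`, so that the leading principal minors are of the same form. -/
def tridiagonal {R : Type*} [Zero R] (a b c : ℕ → R) (n : ℕ) : Matrix (Fin n) (Fin n) R :=
  Matrix.of fun i j =>
    if (i : ℕ) = j then a i
    else if (i : ℕ) + 1 = j then b i
    else if (j : ℕ) + 1 = i then c j
    else 0

theorem tridiagonal_submatrix_castSucc {R : Type*} [Zero R] (a b c : ℕ → R) (n : ℕ) :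
    (tridiagonal a b c (n + 1)).submatrix Fin.castSucc Fin.castSucc = tridiagonal a b c n := by
  ext i j
  simp [tridiagonal]

section CommRing

variable {R : Type*} [CommRing R]

theorem det_tridiagonal_submatrix_castSucc_succAbove (a b c : ℕ → R) (n : ℕ) :
    ((tridiagonal a b c (n + 2)).submatrix Fin.castSucc (Fin.last n).castSucc.succAbove).det =
      b n * (tridiagonal a b c n).det := by
  have last_column : (Fin.last n).castSucc.succAbove (Fin.last n) = Fin.last (n + 1) := by
    simp
  have other_columns (j : Fin n) :
      (Fin.last n).castSucc.succAbove j.castSucc = j.castSucc.castSucc :=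
    Fin.succAbove_of_castSucc_lt _ _ (by simp [Fin.lt_def])
  rw [Matrix.det_succ_column _ (Fin.last n), Finset.sum_eq_single (Fin.last n)]
  · have minor : ((tridiagonal a b c (n + 2)).submatrix Fin.castSucc
        (Fin.last n).castSucc.succAbove).submatrix (Fin.last n).succAbove (Fin.last n).succAbove =
          tridiagonal a b c n := by
      ext i j
      simp [tridiagonal, other_columns]
    rw [minor, Matrix.submatrix_apply, last_column]
    simp [tridiagonal, ← two_mul]
  · intro i _ hi
    have : (i : ℕ) < n := Fin.val_lt_last hi
    rw [Matrix.submatrix_apply, last_column]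
    simp [tridiagonal, show (i : ℕ) ≠ n + 1 by omega, show (i : ℕ) ≠ n by omega,
      show n + 1 + 1 ≠ (i : ℕ) by omega]
  · simp

theorem det_tridiagonal_add_two (a b c : ℕ → R) (n : ℕ) :
    (tridiagonal a b c (n + 2)).det =
      a (n + 1) * (tridiagonal a b c (n + 1)).det -
        b n * c n * (tridiagonal a b c n).det := by
  have sign : (-1 : R) ^ (n + 1 + n) = -1 := Odd.neg_one_pow ⟨n, by ring⟩
  have far_left (i : Fin n) :
      tridiagonal a b c (n + 2) (Fin.last (n + 1)) i.castSucc.castSucc = 0 := by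
    have := i.isLt
    simp [tridiagonal, show n + 1 ≠ (i : ℕ) by omega, show n + 1 + 1 ≠ (i : ℕ) by omega,
      show (i : ℕ) ≠ n by omega]
  have left : tridiagonal a b c (n + 2) (Fin.last (n + 1)) (Fin.last n).castSucc = c n := by
    simp [tridiagonal, show n + 1 + 1 ≠ n by omega]
  have diag : tridiagonal a b c (n + 2) (Fin.last (n + 1)) (Fin.last (n + 1)) = a (n + 1) := by
    simp [tridiagonal]
  rw [Matrix.det_succ_row _ (Fin.last (n + 1)), Fin.sum_univ_castSucc, Fin.sum_univ_castSucc]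
  simp only [far_left, left, diag, Fin.succAbove_last, tridiagonal_submatrix_castSucc,
    det_tridiagonal_submatrix_castSucc_succAbove, Fin.val_castSucc, Fin.val_last, sign,
    Even.neg_one_pow ⟨n + 1, rfl⟩, mul_zero, zero_mul, Finset.sum_const_zero]
  ring

theorem det_eq_mul_det_submatrix_of_rows_eq_off_column {n : ℕ}
    (A : Matrix (Fin (n + 1)) (Fin (n + 1)) R) {r s : Fin (n + 1)} (hrs : r ≠ s)
    (c : Fin (n + 1)) (h : ∀ j ≠ c, A r j = A s j) :
    A.det = (-1) ^ (r + c : ℕ) * (A r c - A s c) *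
      (A.submatrix r.succAbove c.succAbove).det := by
  rw [← Matrix.det_updateRow_add_smul_self A hrs (-1), Matrix.det_succ_row _ r,
    Finset.sum_eq_single c]
  · rw [Matrix.submatrix_updateRow_succAbove]
    simp [sub_eq_add_neg]
  · intro j _ hj
    simp [h j hj]
  · simp

end CommRing

section QuantumBracket

variable {K : Type*} [Field K] {q : K}

theorem qbr_sub_one (hq : q ≠ 0) (Q : K) (m : ℤ) :
    qbr q Q (m - 1) = (q + q⁻¹) * qbr q Q m - qbr q Q (m + 1) := by
  simp only [qbr, neg_add, sub_eq_add_neg, zpow_add₀ hq, zpow_neg, zpow_one]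
  field_simp
  ring

theorem qbr_mul_qbr_add_one_sub (hq : q ≠ 0) (hq2 : q ^ 2 ≠ 1) (Q P : K) (m l : ℤ) :
    qbr q Q m * qbr q P (l + 1) - qbr q Q (m + 1) * qbr q P l = qbr q (Q * P⁻¹) (m - l) := by
  have hden : q ^ 2 - 1 ≠ 0 := sub_ne_zero.2 hq2
  have hsub : q - q⁻¹ = (q ^ 2 - 1) / q := by field_simp
  simp only [qbr, hsub, zpow_neg, zpow_add₀ hq, zpow_sub₀ hq, zpow_one, mul_inv, inv_inv]
  generalize Q⁻¹ = Q', P⁻¹ = P'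
  field_simp
  ring

theorem add_inv_sub_qbr_zero_div_qbr_one (hq : q ≠ 0) {Q : K} (hQ : qbr q Q 1 ≠ 0) :
    q + q⁻¹ - qbr q Q 0 / qbr q Q 1 = qbr q Q 2 / qbr q Q 1 := by
  have hrec : qbr q Q 0 = (q + q⁻¹) * qbr q Q 1 - qbr q Q 2 := qbr_sub_one hq Q 1
  rw [hrec]
  field_simp
  ring

theorem det_tridiagonal_eq_qbr_div (hq : q ≠ 0) {Q : K} (hQ : qbr q Q 1 ≠ 0) {a b c : ℕ → K}
    (ha₀ : a 0 = qbr q Q 0 / qbr q Q 1) (n : ℕ) (ha : ∀ i, i + 1 < n → a (i + 1) = q + q⁻¹)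
    (hbc : ∀ i, i + 1 < n → b i * c i = 1) :
    (tridiagonal a b c n).det = qbr q Q (1 - n) / qbr q Q 1 := by
  induction n using Nat.twoStepInduction with
  | zero => simp [hQ]
  | one => simp [tridiagonal, ha₀]
  | more n ih ih' =>
    have hrec : qbr q Q (1 - (n + 2 : ℕ)) =
        (q + q⁻¹) * qbr q Q (1 - (n + 1 : ℕ)) - qbr q Q (1 - n) := by
      rw [show (1 - (n + 2 : ℕ) : ℤ) = -n - 1 by push_cast; ring,
        show (1 - (n + 1 : ℕ) : ℤ) = -n by push_cast; ring, sub_eq_neg_add 1, qbr_sub_one hq]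
    rw [det_tridiagonal_add_two, ha n (by omega), hbc n (by omega),
      ih (fun i hi => ha i (by omega)) (fun i hi => hbc i (by omega)),
      ih' (fun i hi => ha i (by omega)) (fun i hi => hbc i (by omega)), hrec]
    ring

end QuantumBracket

section SymplecticBlob

/-- The Gram matrix of the symplectic blob cell module, with the left and right blob parameters
`κL`, `κR` and the loop parameter `δ` left arbitrary; `n` is the largest index, not the size. -/
def symplecticBlobGram {R : Type*} [Zero R] [One R] (κL κR δ : R) (n : ℕ) :
    Matrix (Fin (n + 1)) (Fin (n + 1)) R :=
  Matrix.of fun i j =>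
    if ((i : ℕ) = 0 ∧ (j : ℕ) = 0) ∨ ((i : ℕ) = 0 ∧ (j : ℕ) = 1) ∨
        ((i : ℕ) = 1 ∧ (j : ℕ) = 0) then κL
    else if ((i : ℕ) = 0 ∧ (j : ℕ) = 2) ∨ ((i : ℕ) = 2 ∧ (j : ℕ) = 0) then 1
    else if ((i : ℕ) = n - 1 ∧ (j : ℕ) = n) ∨ ((i : ℕ) = n ∧ (j : ℕ) = n - 1) ∨
        ((i : ℕ) = n ∧ (j : ℕ) = n) then κR
    else if (i : ℕ) = (j : ℕ) then δ
    else if (i : ℕ) + 1 = (j : ℕ) ∨ (j : ℕ) + 1 = (i : ℕ) then 1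
    else 0

/-- The tridiagonal matrix obtained, for `n ≥ 3`, from `symplecticBlobGram κL κR δ n` by deleting
row and column `1`; here `n` is the size. -/
def reducedBlobGram {R : Type*} [Zero R] [One R] (κL κR δ : R) (n : ℕ) :
    Matrix (Fin n) (Fin n) R :=
  tridiagonal (fun i => if i = 0 then κL else if i + 1 = n then κR else δ)
    (fun i => if i + 2 = n then κR else 1) (fun i => if i + 2 = n then κR else 1) n

theorem symplecticBlobGram_submatrix_succAbove_one {R : Type*} [Zero R] [One R] (κL κR δ : R)
    {n : ℕ} (hn : 3 ≤ n) :
    (symplecticBlobGram κL κR δ n).submatrix (Fin.succAbove 1) (Fin.succAbove 1) =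
      reducedBlobGram κL κR δ n := by
  obtain ⟨m, rfl⟩ := Nat.exists_eq_add_of_le' hn
  ext i j
  cases i using Fin.cases <;> cases j using Fin.cases <;>
    simp only [Matrix.submatrix_apply, symplecticBlobGram, reducedBlobGram, tridiagonal,
      Matrix.of_apply, Fin.one_succAbove_zero, Fin.one_succAbove_succ, Fin.val_succ,
      Fin.val_zero] <;>
    grind

theorem det_symplecticBlobGram {R : Type*} [CommRing R] (κL κR δ : R) {n : ℕ} (hn : 3 ≤ n) :
    (symplecticBlobGram κL κR δ n).det = (δ - κL) * (reducedBlobGram κL κR δ n).det := by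
  obtain ⟨m, rfl⟩ := Nat.exists_eq_add_of_le' hn
  have rows_agree (j : Fin (m + 3 + 1)) (hj : j ≠ 1) :
      symplecticBlobGram κL κR δ (m + 3) 1 j = symplecticBlobGram κL κR δ (m + 3) 0 j := by
    have : (j : ℕ) ≠ 1 := fun h => hj (Fin.ext h)
    simp only [symplecticBlobGram, Matrix.of_apply, Fin.val_one, Fin.val_zero]
    grind
  have entry_zero_one : symplecticBlobGram κL κR δ (m + 3) 0 1 = κL := by
    simp [symplecticBlobGram]
  have entry_one_one : symplecticBlobGram κL κR δ (m + 3) 1 1 = δ := by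
    simp [symplecticBlobGram]
  rw [det_eq_mul_det_submatrix_of_rows_eq_off_column _ one_ne_zero 1 rows_agree,
    symplecticBlobGram_submatrix_succAbove_one κL κR δ hn, entry_zero_one, entry_one_one,
    Even.neg_one_pow ⟨_, rfl⟩, one_mul]

theorem det_reducedBlobGram {K : Type*} [Field K] {q : K} (hq : q ≠ 0) (hq2 : q ^ 2 ≠ 1)
    {Q₁ Q₂ : K} (hQ₁ : qbr q Q₁ 1 ≠ 0) (hQ₂ : qbr q Q₂ 1 ≠ 0) {n : ℕ} (hn : 2 ≤ n) :
    (reducedBlobGram (qbr q Q₁ 0 / qbr q Q₁ 1) (qbr q Q₂ 0 / qbr q Q₂ 1) (q + q⁻¹) n).det =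
      qbr q Q₂ 0 * qbr q (Q₁ * Q₂⁻¹) (2 - n) / (qbr q Q₁ 1 * qbr q Q₂ 1 ^ 2) := by
  obtain ⟨m, rfl⟩ := Nat.exists_eq_add_of_le' hn
  have cross : qbr q (Q₁ * Q₂⁻¹) (-m) =
      qbr q Q₁ (-m) * qbr q Q₂ 1 - qbr q Q₁ (1 - m) * qbr q Q₂ 0 := by
    have := qbr_mul_qbr_add_one_sub hq hq2 Q₁ Q₂ (-m) 0
    rw [sub_zero, zero_add, neg_add_eq_sub] at this
    exact this.symm
  rw [reducedBlobGram, det_tridiagonal_add_two,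
    det_tridiagonal_eq_qbr_div hq hQ₁ (by simp) (m + 1) (by grind) (by grind),
    det_tridiagonal_eq_qbr_div hq hQ₁ (by simp) m (by grind) (by grind),
    show (1 - (m + 1 : ℕ) : ℤ) = -m by push_cast; ring,
    show (2 - (m + 2 : ℕ) : ℤ) = -m by push_cast; ring, cross]
  simp only [Nat.add_eq_zero_iff, one_ne_zero, and_false, if_false, if_true]
  field_simp

end SymplecticBlob

/-- Let `κ_L = [w₁]/[w₁+1]`, `κ_R = [w₂]/[w₂+1]`, `δ = q + q⁻¹`, and for `n ≥ 3` let `M′` be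
the `(n+1)×(n+1)` matrix with `M′₀₀ = M′₀₁ = M′₁₀ = κ_L`, `M′₀₂ = M′₂₀ = 1`, diagonal
entries `δ` for `1 ≤ i ≤ n-1`, entries `1` at `(i,i+1)`, `(i+1,i)` for `1 ≤ i ≤ n-2`,
`M′_{n-1,n} = M′_{n,n-1} = M′_{nn} = κ_R`, and `0` elsewhere (the Gram matrix of the
symplectic blob cell module with `n-2` undecorated propagating lines).
Then `det M′ = [w₂]·[w₁+2]·[w₁-w₂-n+2] / ([w₁+1]²·[w₂+1]²)`. -/
theorem symplectic_blob_gram_det {K : Type*} [Field K] (q : K) (hq : q ≠ 0)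
    (hq2 : q ^ 2 ≠ 1)
    (Q₁ Q₂ : K) (hQ₁ : Q₁ ≠ 0) (hQ₂ : Q₂ ≠ 0)
    (hw1 : qbr q Q₁ 1 ≠ 0) (hw2 : qbr q Q₂ 1 ≠ 0)
    (κL κR δ : K) (hκL : κL = qbr q Q₁ 0 / qbr q Q₁ 1)
    (hκR : κR = qbr q Q₂ 0 / qbr q Q₂ 1) (hδ : δ = q + q⁻¹)
    (n : ℕ) (hn : 3 ≤ n)
    (M' : Matrix (Fin (n + 1)) (Fin (n + 1)) K)
    (hM' : ∀ i j : Fin (n + 1), M' i j =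
      if ((i : ℕ) = 0 ∧ (j : ℕ) = 0) ∨ ((i : ℕ) = 0 ∧ (j : ℕ) = 1) ∨
          ((i : ℕ) = 1 ∧ (j : ℕ) = 0) then κL
      else if ((i : ℕ) = 0 ∧ (j : ℕ) = 2) ∨ ((i : ℕ) = 2 ∧ (j : ℕ) = 0) then 1
      else if ((i : ℕ) = n - 1 ∧ (j : ℕ) = n) ∨ ((i : ℕ) = n ∧ (j : ℕ) = n - 1) ∨
          ((i : ℕ) = n ∧ (j : ℕ) = n) then κR
      else if (i : ℕ) = (j : ℕ) then δ
      else if (i : ℕ) + 1 = (j : ℕ) ∨ (j : ℕ) + 1 = (i : ℕ) then 1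
      else 0) :
    M'.det = qbr q Q₂ 0 * qbr q Q₁ 2 * qbr q (Q₁ * Q₂⁻¹) (2 - n) /
      ((qbr q Q₁ 1) ^ 2 * (qbr q Q₂ 1) ^ 2) := by
  obtain rfl : M' = symplecticBlobGram κL κR δ n := Matrix.ext hM'
  subst hκL hκR hδ
  rw [det_symplecticBlobGram _ _ _ hn, add_inv_sub_qbr_zero_div_qbr_one hq hw1,
    det_reducedBlobGram hq hq2 hw1 hw2 (by omega)]
  field_simp
end

section
/- For all integers F, G and every nonzero element Q of K (representing a formal exponent Kₑ), the following identity holds in K: −(q+q^{−1})·[F+1]·[G+1]·[Kₑ−G−1] + [F+1]·[Kₑ] + [F+1]·[G]·[Kₑ−G−1] + [F]·[G+1]·[Kₑ−G−1] + [G+1]·[Kₑ−F−G−2] = 0, where for an integer m the shifted bracket [Kₑ+m] := (Q·q^m − Q^{−1}·q^{−m})/(q − q^{−1}). (This is the vanishing of the coefficient C_D for the undecorated diagram of Figure cdzerolines.) -/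
section QuantumBrackets

variable {K : Type*} [Field K] {q : K}

theorem qbr_one (q : K) (m : ℤ) : qbr q 1 m = qint q m := by
  simp only [qbr, qint, inv_one, one_mul]

theorem qint_neg (q : K) (m : ℤ) : qint q (-m) = -qint q m := by
  rw [qint, qint, neg_neg, ← neg_div, neg_sub]

theorem qint_one (hq : q ≠ 0) (hq2 : q ^ 2 ≠ 1) : qint q 1 = 1 := by
  have hd : q - q⁻¹ ≠ 0 := by
    rwa [sub_ne_zero, ne_eq, ← mul_eq_one_iff_eq_inv₀ hq, ← sq]
  rw [qint, zpow_one, zpow_neg_one, div_self hd]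

theorem qint_add_mul_qbr (hq : q ≠ 0) (Q : K) (a b c : ℤ) :
    qint q (a + b) * qbr q Q c = qint q a * qbr q Q (c + b) + qint q b * qbr q Q (c - a) := by
  simp only [qint, qbr, sub_eq_add_neg c a, neg_add, neg_neg, zpow_add₀ hq]
  ring

theorem add_inv_mul_qbr (hq : q ≠ 0) (Q : K) (m : ℤ) :
    (q + q⁻¹) * qbr q Q m = qbr q Q (m + 1) + qbr q Q (m - 1) := by
  simp only [qbr, sub_eq_add_neg m 1, neg_add, neg_neg, zpow_add₀ hq, zpow_one, zpow_neg_one]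
  ring

theorem qint_add_one_mul_qint_add_one (hq : q ≠ 0) (hq2 : q ^ 2 ≠ 1) (a b : ℤ) :
    qint q (a + 1) * qint q (b + 1) = qint q a * qint q b + qint q (a + b + 1) := by
  have three_term : qint q (b + 1 + a) * qint q 1 =
      qint q (b + 1) * qint q (1 + a) + qint q a * qint q (1 - (b + 1)) := by
    simpa only [qbr_one] using qint_add_mul_qbr hq 1 (b + 1) a 1
  rw [qint_one hq hq2, show b + 1 + a = a + b + 1 by ring, add_comm 1 a,
    show 1 - (b + 1) = -b by ring, qint_neg] at three_term
  linear_combination -three_term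

theorem add_inv_mul_qint_add_one_mul_qint_add_one (hq : q ≠ 0) (hq2 : q ^ 2 ≠ 1) (a b : ℤ) :
    (q + q⁻¹) * qint q (a + 1) * qint q (b + 1) =
      qint q (a + 1) * qint q b + qint q a * qint q (b + 1) + qint q (a + b + 2) := by
  have recurrence : (q + q⁻¹) * qint q (a + 1) = qint q (a + 1 + 1) + qint q a := by
    simpa only [qbr_one, add_sub_cancel_right] using add_inv_mul_qbr hq 1 (a + 1)
  calc (q + q⁻¹) * qint q (a + 1) * qint q (b + 1)
      = qint q (a + 1 + 1) * qint q (b + 1) + qint q a * qint q (b + 1) := by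
        rw [recurrence, add_mul]
    _ = qint q (a + 1) * qint q b + qint q (a + 1 + b + 1) + qint q a * qint q (b + 1) := by
        rw [qint_add_one_mul_qint_add_one hq hq2]
    _ = qint q (a + 1) * qint q b + qint q a * qint q (b + 1) + qint q (a + b + 2) := by
        rw [add_right_comm, show a + 1 + b + 1 = a + b + 2 by ring]

end QuantumBrackets

/-- For all integers `F, G` and nonzero `Q = q^{Kₑ}`:
`-(q+q⁻¹)·[F+1]·[G+1]·[Kₑ-G-1] + [F+1]·[Kₑ] + [F+1]·[G]·[Kₑ-G-1]
  + [F]·[G+1]·[Kₑ-G-1] + [G+1]·[Kₑ-F-G-2] = 0`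
(the vanishing of the coefficient `C_D` for the undecorated diagram of Figure
`cdzerolines`). -/
theorem cdzerolines_identity {K : Type*} [Field K] (q : K) (hq : q ≠ 0) (hq2 : q ^ 2 ≠ 1)
    (F G : ℤ) (Q : K) (hQ : Q ≠ 0) :
    -(q + q⁻¹) * qint q (F + 1) * qint q (G + 1) * qbr q Q (-G - 1) +
      qint q (F + 1) * qbr q Q 0 +
      qint q (F + 1) * qint q G * qbr q Q (-G - 1) +
      qint q F * qint q (G + 1) * qbr q Q (-G - 1) +
      qint q (G + 1) * qbr q Q (-F - G - 2) = 0 := by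
  have collapse := add_inv_mul_qint_add_one_mul_qint_add_one hq hq2 F G
  have three_term : qint q (F + G + 2) * qbr q Q (-G - 1) =
      qint q (F + 1) * qbr q Q 0 + qint q (G + 1) * qbr q Q (-F - G - 2) := by
    convert qint_add_mul_qbr hq Q (F + 1) (G + 1) (-G - 1) using 3 <;> ring_nf
  linear_combination -qbr q Q (-G - 1) * collapse - three_term
end

section
/- Let l ≥ 2 be an integer with q^l = −1. Then for every integer A and every nonzero element Q₁ of K (representing a formal exponent w₁), the following identity holds in K: [w₁+1]·[l−A] + [A]·[w₁−l+1] = 0, where [w₁+m] := (Q₁·q^m − Q₁^{−1}·q^{−m})/(q − q^{−1}). (This is the vanishing of the coefficient C_D in Case 2 of the proof of the fourth family of homomorphisms.) -/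
section Brackets

variable {K : Type*} [Field K] {q : K}

/-- The Plücker relation `[x]·[y-z] + [y]·[z-x] + [z]·[x-y] = 0` at `x = w₁+m`, `y = a`, `z = b`;
with `[l] = 0` it forces `C_D` to vanish. -/
theorem qbr_mul_qint_sub_add_qint_mul_qbr_sub (hq : q ≠ 0) (Q : K) (m a b : ℤ) :
    qbr q Q m * qint q (a - b) + qint q b * qbr q Q (m - a) = qint q a * qbr q Q (m - b) := by
  simp only [qbr, qint, zpow_neg, zpow_sub₀ hq, inv_div]
  ring

theorem qint_eq_zero_iff (hq : q ≠ 0) (hq2 : q ^ 2 ≠ 1) (n : ℤ) :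
    qint q n = 0 ↔ q ^ (2 * n) = 1 := by
  have sub_inv_ne_zero : q - q⁻¹ ≠ 0 := by
    rwa [sub_ne_zero, Ne, ← mul_eq_one_iff_eq_inv₀ hq, ← sq]
  rw [qint, div_eq_zero_iff, or_iff_left sub_inv_ne_zero, sub_eq_zero, zpow_neg,
    ← mul_eq_one_iff_eq_inv₀ (zpow_ne_zero n hq), ← zpow_add₀ hq, two_mul]

end Brackets

theorem case2_vanishing_general {K : Type*} [Field K] (q : K) (hq : q ≠ 0) (hq2 : q ^ 2 ≠ 1)
    (l : ℤ) (hql : q ^ (2 * l) = 1) :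
    ∀ (m A : ℤ) (Q₁ : K), Q₁ ≠ 0 →
      qbr q Q₁ m * qint q (l - A) + qint q A * qbr q Q₁ (m - l) = 0 := by
  intro m A Q₁ _
  rw [qbr_mul_qint_sub_add_qint_mul_qbr_sub hq, (qint_eq_zero_iff hq hq2 l).mpr hql, zero_mul]

/-- Let `l ≥ 2` with `q^l = -1`. Then for every integer `A` and nonzero `Q₁ = q^{w₁}`:
`[w₁+1]·[l-A] + [A]·[w₁-l+1] = 0` (the vanishing of the coefficient `C_D` in Case 2 of
the proof of the fourth family of homomorphisms). -/
theorem case2_vanishing {K : Type*} [Field K] (q : K) (hq : q ≠ 0) (hq2 : q ^ 2 ≠ 1)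
    (l : ℤ) (hl : 2 ≤ l) (hql : q ^ l = -1) :
    ∀ (A : ℤ) (Q₁ : K), Q₁ ≠ 0 →
      qbr q Q₁ 1 * qint q (l - A) + qint q A * qbr q Q₁ (1 - l) = 0 := by
  have zpow_two_mul_eq_one : q ^ (2 * l) = 1 := by
    rw [two_mul, zpow_add₀ hq, hql, neg_one_mul, neg_neg]
  exact case2_vanishing_general q hq hq2 l zpow_two_mul_eq_one 1
end
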